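/- Equip P = k[x₁,x₂,x₃] with the Poisson bracket {x₁,x₂} = x₁² + x₂², {x₂,x₃} = 3x₁² + 2x₁x₃, {x₃,x₁} = 2x₂x₃. Then for an invertible matrix M = (a_{ij}), φ_M is a graded Poisson automorphism of P if and only if either M = a·I₃ for some a ∈ k \ {0}, or M = [[−a/2, (s/2)a, 0],[−(s/2)a, −a/2, 0],[(9/8)a, −(3s/8)a, a]] for some a ∈ k \ {0} and some s ∈ k with s² = 3. In particular, P has no Poisson reflections. -/

import Mathlib

open MvPolynomial

/-- The bracket on `k[x₁,x₂,x₃]` determined by the values `p12 = {x₁,x₂}`, `p23 = {x₂,x₃}`,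
`p31 = {x₃,x₁}` via `{f,g} = Σ_{i<j} (∂f/∂xᵢ·∂g/∂xⱼ − ∂f/∂xⱼ·∂g/∂xᵢ)·{xᵢ,xⱼ}`. -/
noncomputable def jacBracket {k : Type*} [Field k] (p12 p23 p31 : MvPolynomial (Fin 3) k)
    (f g : MvPolynomial (Fin 3) k) : MvPolynomial (Fin 3) k :=
  (pderiv 0 f * pderiv 1 g - pderiv 1 f * pderiv 0 g) * p12 +
    (pderiv 1 f * pderiv 2 g - pderiv 2 f * pderiv 1 g) * p23 +
    (pderiv 2 f * pderiv 0 g - pderiv 0 f * pderiv 2 g) * p31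

/-- The graded algebra endomorphism `φ_M` of `k[x₁,x₂,x₃]` with `φ_M(xᵢ) = Σⱼ M i j · xⱼ`. -/
noncomputable def phiM {k : Type*} [Field k] (M : Matrix (Fin 3) (Fin 3) k) :
    MvPolynomial (Fin 3) k →ₐ[k] MvPolynomial (Fin 3) k :=
  aeval fun i => ∑ j, C (M i j) * X j

/-- `φ_M` is a graded Poisson automorphism (for invertible `M`) iff it preserves the bracket. -/
def IsPoissonAut {k : Type*} [Field k]
    (br : MvPolynomial (Fin 3) k → MvPolynomial (Fin 3) k → MvPolynomial (Fin 3) k)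
    (M : Matrix (Fin 3) (Fin 3) k) : Prop :=
  ∀ f g, phiM M (br f g) = br (phiM M f) (phiM M g)

/-- `φ_M` is a Poisson reflection: a graded Poisson automorphism of finite order whose
eigenvalues are `1, 1, ξ` for some root of unity `ξ ≠ 1`. -/
def IsPoissonReflection {k : Type*} [Field k]
    (br : MvPolynomial (Fin 3) k → MvPolynomial (Fin 3) k → MvPolynomial (Fin 3) k)
    (M : Matrix (Fin 3) (Fin 3) k) : Prop :=
  IsPoissonAut br M ∧ (∃ n, 0 < n ∧ M ^ n = 1) ∧
    ∃ ξ : k, ξ ≠ 1 ∧ (∃ m, 0 < m ∧ ξ ^ m = 1) ∧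
      M.charpoly = (Polynomial.X - 1) ^ 2 * (Polynomial.X - Polynomial.C ξ)

/-!
The bracket is the Jacobian bracket `{f, g} = (∇f × ∇g) ⬝ ∇Ω` of the nodal cubic
`Ω = x₁³ + (x₁² + x₂²)x₃`. By the chain rule and Euler's identity, an invertible `M` preserves such
a bracket exactly when it scales `Ω` by `det M`. A linear map scaling `Ω` fixes the node of the
curve and acts conformally on the tangent cone `x₁² + x₂²` there; comparing the remaining
coefficients leaves only the scalar matrices and those whose angle of rotation is `±2π/3`. All of
these satisfy `M ^ 3 = det M`, so an eigenvalue `1` forces `det M = 1`, whereas a reflection has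
`det M = ξ ≠ 1`.
-/

open Matrix

section ChainRule

variable {R σ : Type*} [CommSemiring R]

/-- The gradient of a polynomial, as a vector of polynomials. -/
noncomputable def grad (f : MvPolynomial σ R) : σ → MvPolynomial σ R := fun i => pderiv i f

theorem grad_X [DecidableEq σ] (i : σ) : grad (X i : MvPolynomial σ R) = Pi.single i 1 := by
  ext1 j
  rw [grad, pderiv_X]
  exact Pi.single_comm j 1 i

theorem grad_C_mul (c : R) (f : MvPolynomial σ R) :
    grad (C c * f) = (C c : MvPolynomial σ R) • grad f :=
  funext fun _ => pderiv_C_mul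

theorem derivation_aeval [Fintype σ] {A N : Type*} [CommSemiring A] [Algebra R A]
    [AddCommMonoid N] [Module A N] [Module R N] (D : Derivation R A N)
    (g : σ → A) (f : MvPolynomial σ R) :
    D (aeval g f) = ∑ j, aeval g (pderiv j f) • D (g j) := by
  classical
  induction f using MvPolynomial.induction_on with
  | C a => simp
  | add p q hp hq => simp only [map_add, hp, hq, add_smul, Finset.sum_add_distrib]
  | mul_X p n hp =>
    simp [hp, pderiv_X, Pi.single_apply, apply_ite (aeval g), add_smul, Finset.sum_add_distrib,
      Finset.smul_sum, smul_smul]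

theorem eq_of_grad_eq [Finite σ] {n : ℕ} (hn : IsUnit (n : R)) {f g : MvPolynomial σ R}
    (hf : f.IsHomogeneous n) (hg : g.IsHomogeneous n) (h : grad f = grad g) : f = g := by
  have hnfg : n • f = n • g := by
    have := Fintype.ofFinite σ
    rw [← hf.sum_X_mul_pderiv, ← hg.sum_X_mul_pderiv]
    exact Finset.sum_congr rfl fun i _ => congrArg (X i * ·) (congrFun h i)
  rw [← Nat.cast_smul_eq_nsmul R, ← Nat.cast_smul_eq_nsmul R] at hnfg
  exact hn.smul_left_cancel.mp hnfg

end ChainRule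

theorem cross_mulVec {R : Type*} [CommRing R] (A : Matrix (Fin 3) (Fin 3) R) (u v : Fin 3 → R) :
    (A *ᵥ u) ⨯₃ (A *ᵥ v) = A.adjugateᵀ *ᵥ (u ⨯₃ v) := by
  ext i
  fin_cases i <;>
    simp [cross_apply, Matrix.adjugate_fin_three, Matrix.mulVec, vec3_dotProduct] <;> ring

theorem comp_cross {R S : Type*} [CommRing R] [CommRing S] (φ : R →+* S) (u v : Fin 3 → R) :
    φ ∘ (u ⨯₃ v) = (φ ∘ u) ⨯₃ (φ ∘ v) := by
  ext i
  fin_cases i <;> simp [cross_apply]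

section LinearSubstitution

variable {k : Type*} [Field k]

theorem phiM_X (M : Matrix (Fin 3) (Fin 3) k) (i : Fin 3) : phiM M (X i) = ∑ j, C (M i j) * X j :=
  aeval_X _ i

theorem isHomogeneous_phiM {n : ℕ} {f : MvPolynomial (Fin 3) k} (hf : f.IsHomogeneous n)
    (M : Matrix (Fin 3) (Fin 3) k) : (phiM M f).IsHomogeneous n := by
  rw [← one_mul n]
  exact hf.aeval _ fun i => IsHomogeneous.sum _ _ _ fun j _ => isHomogeneous_C_mul_X _ j

theorem eval_phiM (M : Matrix (Fin 3) (Fin 3) k) (v : Fin 3 → k) (f : MvPolynomial (Fin 3) k) :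
    eval v (phiM M f) = eval (M *ᵥ v) f := by
  change ((aeval v).comp (phiM M)) f = aeval (M *ᵥ v) f
  congr 1
  ext i
  simp [phiM_X, Matrix.mulVec, dotProduct]

theorem grad_phiM (M : Matrix (Fin 3) (Fin 3) k) (f : MvPolynomial (Fin 3) k) :
    grad (phiM M f) = (M.map C)ᵀ *ᵥ (phiM M ∘ grad f) := by
  ext1 i
  have hXi (j : Fin 3) : pderiv i (∑ l, C (M j l) * X l) = C (M j i) := by
    simp [pderiv_X, Pi.single_apply]
  rw [grad, phiM, derivation_aeval]
  exact Finset.sum_congr rfl fun j _ => by rw [hXi, smul_eq_mul, mul_comm]; rfl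

end LinearSubstitution

section Bracket

variable {k : Type*} [Field k] (w : Fin 3 → MvPolynomial (Fin 3) k)
  (M : Matrix (Fin 3) (Fin 3) k)

theorem jacBracket_eq_cross_dotProduct (f g : MvPolynomial (Fin 3) k) :
    jacBracket (w 2) (w 0) (w 1) f g = (grad f ⨯₃ grad g) ⬝ᵥ w := by
  rw [jacBracket, cross_apply, vec3_dotProduct]
  dsimp only [Matrix.cons_val, grad]
  ring

theorem phiM_jacBracket (f g : MvPolynomial (Fin 3) k) :
    phiM M (jacBracket (w 2) (w 0) (w 1) f g) =
      (phiM M ∘ (grad f ⨯₃ grad g)) ⬝ᵥ (phiM M ∘ w) := by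
  rw [jacBracket_eq_cross_dotProduct]
  exact RingHom.map_dotProduct (phiM M).toRingHom _ _

theorem jacBracket_phiM (f g : MvPolynomial (Fin 3) k) :
    jacBracket (w 2) (w 0) (w 1) (phiM M f) (phiM M g) =
      (phiM M ∘ (grad f ⨯₃ grad g)) ⬝ᵥ ((M.map C).adjugateᵀ *ᵥ w) := by
  have hcomp : phiM M ∘ (grad f ⨯₃ grad g) = (phiM M ∘ grad f) ⨯₃ (phiM M ∘ grad g) :=
    comp_cross (phiM M).toRingHom _ _
  rw [jacBracket_eq_cross_dotProduct, grad_phiM, grad_phiM, cross_mulVec, ← hcomp,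
    mulVec_transpose (M.map C).adjugate, dotProduct_comm _ (w ᵥ* _), ← dotProduct_mulVec,
    dotProduct_comm w, adjugate_transpose, transpose_transpose]

theorem exists_grad_cross_grad_eq_single (i : Fin 3) : ∃ f g : MvPolynomial (Fin 3) k,
    grad f ⨯₃ grad g = Pi.single i 1 := by
  refine ⟨X (i + 1), X (i + 2), ?_⟩
  ext1 j
  fin_cases i <;> fin_cases j <;> simp [grad_X, cross_apply]

theorem isPoissonAut_jacBracket_iff :
    IsPoissonAut (jacBracket (w 2) (w 0) (w 1)) M ↔
      phiM M ∘ w = (M.map C).adjugateᵀ *ᵥ w := by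
  simp only [IsPoissonAut, phiM_jacBracket, jacBracket_phiM]
  refine ⟨fun h => funext fun i => ?_, fun h f g => by rw [h]⟩
  obtain ⟨f, g, hfg⟩ := exists_grad_cross_grad_eq_single (k := k) i
  have hsingle : phiM M ∘ (Pi.single i 1 : Fin 3 → MvPolynomial (Fin 3) k) = Pi.single i 1 := by
    ext1 j
    simp [Pi.single_apply, apply_ite (phiM M)]
  simpa only [hfg, hsingle, single_one_dotProduct] using h f g

variable {M}

theorem isPoissonAut_jacBracket_grad_iff_grad_eq (hM : IsUnit M.det)
    (Ω : MvPolynomial (Fin 3) k) :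
    IsPoissonAut (jacBracket (grad Ω 2) (grad Ω 0) (grad Ω 1)) M ↔
      grad (phiM M Ω) = grad (C M.det * Ω) := by
  have hdet : C M.det = (M.map C : Matrix _ _ (MvPolynomial (Fin 3) k)).det :=
    RingHom.map_det C M
  have hunit : IsUnit (M.map C : Matrix _ _ (MvPolynomial (Fin 3) k))ᵀ := by
    rw [isUnit_iff_isUnit_det, det_transpose, ← hdet]
    exact hM.map C
  have hadj : (C M.det : MvPolynomial (Fin 3) k) • grad Ω =
      (M.map C)ᵀ *ᵥ ((M.map C).adjugateᵀ *ᵥ grad Ω) := by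
    rw [mulVec_mulVec, ← transpose_mul, adjugate_mul, transpose_smul, transpose_one, smul_mulVec,
      one_mulVec, hdet]
  rw [isPoissonAut_jacBracket_iff, grad_phiM, grad_C_mul, hadj]
  exact (mulVec_injective_of_isUnit hunit).eq_iff.symm

theorem isPoissonAut_jacBracket_grad_iff (hM : IsUnit M.det) {n : ℕ} (hn : (n : k) ≠ 0)
    {Ω : MvPolynomial (Fin 3) k} (hΩ : Ω.IsHomogeneous n) :
    IsPoissonAut (jacBracket (grad Ω 2) (grad Ω 0) (grad Ω 1)) M ↔
      phiM M Ω = C M.det * Ω := by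
  rw [isPoissonAut_jacBracket_grad_iff_grad_eq hM]
  exact ⟨eq_of_grad_eq hn.isUnit (isHomogeneous_phiM hΩ M) (hΩ.C_mul M.det),
    fun h => by rw [h]⟩

theorem eval_grad_mulVec_eq_zero (hM : IsUnit M.det) {Ω : MvPolynomial (Fin 3) k} {c : k}
    (hΩ : phiM M Ω = C c * Ω) {v : Fin 3 → k} (hv : eval v ∘ grad Ω = 0) :
    eval (M *ᵥ v) ∘ grad Ω = 0 := by
  have hMgrad : Mᵀ *ᵥ (eval (M *ᵥ v) ∘ grad Ω) = 0 := by
    ext i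
    have h := congrArg (eval v) (congrFun ((grad_phiM M Ω).symm.trans
      ((congrArg grad hΩ).trans (grad_C_mul c Ω))) i)
    have hvi : eval v (grad Ω i) = 0 := congrFun hv i
    simpa [Matrix.mulVec, dotProduct, eval_phiM, hvi] using h
  exact eq_zero_of_mulVec_eq_zero (by rwa [det_transpose, ← isUnit_iff_ne_zero]) hMgrad

end Bracket

section NodalCubic

/-- The plane cubic `x₁³ + (x₁² + x₂²)x₃`, with a node at `[0 : 0 : 1]`; its gradient gives the
bracket of the theorem. -/
noncomputable def nodalCubic (R : Type*) [CommSemiring R] : MvPolynomial (Fin 3) R :=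
  X 0 ^ 3 + (X 0 ^ 2 + X 1 ^ 2) * X 2

theorem isHomogeneous_nodalCubic (R : Type*) [CommSemiring R] :
    (nodalCubic R).IsHomogeneous 3 :=
  (isHomogeneous_X_pow 0 3).add
    (((isHomogeneous_X_pow 0 2).add (isHomogeneous_X_pow 1 2)).mul (isHomogeneous_X R 2))

theorem grad_nodalCubic (R : Type*) [CommSemiring R] :
    grad (nodalCubic R) = ![3 * X 0 ^ 2 + 2 * X 0 * X 2, 2 * X 1 * X 2, X 0 ^ 2 + X 1 ^ 2] := by
  ext1 i
  fin_cases i <;> simp [grad, nodalCubic, pderiv_X, mul_comm]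

variable {k : Type*} [Field k]

theorem eval_nodalCubic (v : Fin 3 → k) :
    eval v (nodalCubic k) = v 0 ^ 3 + (v 0 ^ 2 + v 1 ^ 2) * v 2 := by
  simp [nodalCubic]

theorem eval_grad_nodalCubic_eq_zero_iff (h2 : (2 : k) ≠ 0) (h3 : (3 : k) ≠ 0) (v : Fin 3 → k) :
    eval v ∘ grad (nodalCubic k) = 0 ↔ v 0 = 0 ∧ v 1 = 0 := by
  have hgrad : eval v ∘ grad (nodalCubic k) = 0 ↔
      3 * v 0 ^ 2 + 2 * v 0 * v 2 = 0 ∧ 2 * v 1 * v 2 = 0 ∧ v 0 ^ 2 + v 1 ^ 2 = 0 := by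
    simp [grad_nodalCubic, funext_iff, Fin.forall_fin_succ]
  rw [hgrad]
  refine ⟨fun ⟨hx, hy, hz⟩ => ?_, fun ⟨h0, h1⟩ => by simp [h0, h1]⟩
  have h0 : v 0 = 0 := by
    rcases mul_eq_zero.mp hy with h | h
    · simpa [(mul_eq_zero_iff_left h2).mp h] using hz
    · simpa [h, h3] using hx
  exact ⟨h0, by simpa [h0] using hz⟩

/-- The linear map which, for `s² = 3`, induces a cyclic permutation of the three inflection points
of the nodal cubic; `a` is its eigenvalue at the node. -/
def flexRotation (a s : k) : Matrix (Fin 3) (Fin 3) k :=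
  !![-a / 2, s * a / 2, 0; -(s * a) / 2, -a / 2, 0; 9 * a / 8, -(3 * s * a) / 8, a]

theorem exists_flexRotation_eq (h2 : (2 : k) ≠ 0) (a s : k) : ∃ t, a = 8 * t ∧ flexRotation a s =
    !![-(4 * t), 4 * s * t, 0; -(4 * s * t), -(4 * t), 0; 9 * t, -(3 * s * t), 8 * t] := by
  have h8 : (8 : k) ≠ 0 := by simpa [show (8 : k) = 2 ^ 3 by norm_num] using h2
  obtain ⟨t, rfl⟩ : ∃ t, a = 8 * t := ⟨a / 8, (mul_div_cancel₀ a h8).symm⟩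
  refine ⟨t, rfl, ?_⟩
  ext i j
  fin_cases i <;> fin_cases j <;> simp [flexRotation] <;> field_simp <;> ring

theorem det_flexRotation (h2 : (2 : k) ≠ 0) (a : k) {s : k} (hs : s ^ 2 = 3) :
    (flexRotation a s).det = a ^ 3 := by
  obtain ⟨t, rfl, hflex⟩ := exists_flexRotation_eq h2 a s
  rw [hflex]
  simp [det_fin_three]
  linear_combination 128 * t ^ 3 * hs

theorem flexRotation_pow_three (h2 : (2 : k) ≠ 0) (a : k) {s : k} (hs : s ^ 2 = 3) :
    flexRotation a s ^ 3 = a ^ 3 • (1 : Matrix (Fin 3) (Fin 3) k) := by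
  obtain ⟨t, rfl, hflex⟩ := exists_flexRotation_eq h2 a s
  rw [hflex, pow_three]
  ext i j
  fin_cases i <;> fin_cases j <;> simp [Matrix.mul_apply, Fin.sum_univ_three] <;> grind

theorem phiM_smul_one_nodalCubic (a : k) :
    phiM (a • (1 : Matrix (Fin 3) (Fin 3) k)) (nodalCubic k) = C (a ^ 3) * nodalCubic k := by
  simp [nodalCubic, phiM_X, Fin.sum_univ_three]
  ring

theorem phiM_flexRotation_nodalCubic (h2 : (2 : k) ≠ 0) (a : k) {s : k} (hs : s ^ 2 = 3) :
    phiM (flexRotation a s) (nodalCubic k) = C (a ^ 3) * nodalCubic k := by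
  obtain ⟨t, rfl, hflex⟩ := exists_flexRotation_eq h2 a s
  have hS : (C s : MvPolynomial (Fin 3) k) ^ 2 = 3 := by
    rw [← map_pow, hs, map_ofNat]
  rw [hflex]
  simp [nodalCubic, phiM_X, Fin.sum_univ_three, map_ofNat (C (R := k) (σ := Fin 3))]
  linear_combination (16 * C t ^ 2 * (X 0 ^ 2 + X 1 ^ 2) *
      (9 * C t * X 0 - 3 * C s * C t * X 1 + 8 * C t * X 2) +
    64 * C t ^ 3 * (C s * X 1 ^ 3 - 3 * X 0 * X 1 ^ 2)) * hS

theorem flexRotation_neg_two_mul (h2 : (2 : k) ≠ 0) {a : k} (ha : a ≠ 0) (d : k) :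
    flexRotation (-(2 * a)) (d / a) =
      !![a, -d, 0; d, a, 0; -(9 * a) / 4, 3 * d / 4, -(2 * a)] := by
  have h4 : (4 : k) ≠ 0 := by simpa [show (4 : k) = 2 ^ 2 by norm_num] using h2
  have h8 : (8 : k) ≠ 0 := by simpa [show (8 : k) = 2 ^ 3 by norm_num] using h2
  ext i j
  fin_cases i <;> fin_cases j <;> simp [flexRotation] <;> field_simp <;> ring

theorem eval_mulVec_of_phiM_eq {M : Matrix (Fin 3) (Fin 3) k} {Ω : MvPolynomial (Fin 3) k} {c : k}
    (hΩ : phiM M Ω = C c * Ω) (v : Fin 3 → k) : eval (M *ᵥ v) Ω = c * eval v Ω := by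
  simpa [eval_phiM] using congrArg (eval v) hΩ

theorem apply_two_eq_zero_of_phiM_nodalCubic (h2 : (2 : k) ≠ 0) (h3 : (3 : k) ≠ 0)
    {M : Matrix (Fin 3) (Fin 3) k} (hM : IsUnit M.det) {c : k}
    (hΩ : phiM M (nodalCubic k) = C c * nodalCubic k) : M 0 2 = 0 ∧ M 1 2 = 0 := by
  have hnode : eval (Pi.single 2 1) ∘ grad (nodalCubic k) = 0 := by
    simp [eval_grad_nodalCubic_eq_zero_iff h2 h3]
  simpa using (eval_grad_nodalCubic_eq_zero_iff h2 h3 _).mp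
    (eval_grad_mulVec_eq_zero hM hΩ hnode)

-- The part of the cubic linear in `z` is its tangent cone `x² + y²` at the node, so that form is
-- preserved up to scale.
theorem conformal_of_phiM_nodalCubic (h2 : (2 : k) ≠ 0) {a b d e g h i : k}
    (hdet : (a * e - b * d) * i ≠ 0)
    (hΩ : phiM !![a, b, 0; d, e, 0; g, h, i] (nodalCubic k) =
      C ((a * e - b * d) * i) * nodalCubic k) :
    e = a ∧ b = -d := by
  obtain ⟨hD, hi⟩ := mul_ne_zero_iff.mp hdet
  have hform (x y : k) :
      (a * x + b * y) ^ 2 + (d * x + e * y) ^ 2 = (a * e - b * d) * (x ^ 2 + y ^ 2) := by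
    have hcubic (z : k) :
        (a * x + b * y) ^ 3 +
            ((a * x + b * y) ^ 2 + (d * x + e * y) ^ 2) * (g * x + h * y + i * z) =
          (a * e - b * d) * i * (x ^ 3 + (x ^ 2 + y ^ 2) * z) := by
      simpa [eval_nodalCubic, add_assoc, mul_comm] using eval_mulVec_of_phiM_eq hΩ ![x, y, z]
    exact mul_right_cancel₀ hi (by linear_combination hcubic 1 - hcubic 0)
  have hcol : a ^ 2 + d ^ 2 = a * e - b * d := by linear_combination hform 1 0
  have horth : a * b + d * e = 0 :=
    mul_left_cancel₀ h2 (by linear_combination hform 1 1 - hform 1 0 - hform 0 1)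
  exact ⟨mul_left_cancel₀ hD (by linear_combination d * horth - e * hcol),
    mul_left_cancel₀ hD (by linear_combination a * horth - b * hcol)⟩

theorem coeff_eqs_of_phiM_nodalCubic (h2 : (2 : k) ≠ 0) {a d g h i : k}
    (hΩ : phiM !![a, -d, 0; d, a, 0; g, h, i] (nodalCubic k) =
      C ((a ^ 2 + d ^ 2) * i) * nodalCubic k) :
    a ^ 3 + (a ^ 2 + d ^ 2) * g = (a ^ 2 + d ^ 2) * i ∧ (a ^ 2 + d ^ 2) * h = 3 * a ^ 2 * d ∧
      (a ^ 2 + d ^ 2) * g = -(3 * a * d ^ 2) ∧ (a ^ 2 + d ^ 2) * h = d ^ 3 := by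
  have hcubic (x y : k) :
      (a * x - d * y) ^ 3 + ((a * x - d * y) ^ 2 + (d * x + a * y) ^ 2) * (g * x + h * y) =
        (a ^ 2 + d ^ 2) * i * x ^ 3 := by
    simpa [eval_nodalCubic, sub_eq_add_neg, mul_comm] using eval_mulVec_of_phiM_eq hΩ ![x, y, 0]
  have hx := hcubic 1 0
  have hy := hcubic 0 1
  have hadd := hcubic 1 1
  have hsub := hcubic 1 (-1)
  refine ⟨by linear_combination hx, mul_left_cancel₀ h2 ?_, mul_left_cancel₀ h2 ?_,
    by linear_combination hy⟩
  · linear_combination hadd - hsub - 2 * hy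
  · linear_combination hadd + hsub - 2 * hx

theorem eq_smul_one_or_eq_flexRotation_of_conformal (h2 : (2 : k) ≠ 0) {a d g h i : k}
    (hD : a ^ 2 + d ^ 2 ≠ 0)
    (hΩ : phiM !![a, -d, 0; d, a, 0; g, h, i] (nodalCubic k) =
      C ((a ^ 2 + d ^ 2) * i) * nodalCubic k) :
    a ≠ 0 ∧ (!![a, -d, 0; d, a, 0; g, h, i] = a • (1 : Matrix (Fin 3) (Fin 3) k) ∨
      d ^ 2 = 3 * a ^ 2 ∧
        !![a, -d, 0; d, a, 0; g, h, i] = flexRotation (-(2 * a)) (d / a)) := by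
  obtain ⟨hxxx, hxxy, hxyy, hyyy⟩ := coeff_eqs_of_phiM_nodalCubic h2 hΩ
  have hd : d = 0 ∨ d ^ 2 = 3 * a ^ 2 := by
    rw [← sub_eq_zero (a := d ^ 2), ← mul_eq_zero]
    linear_combination hxxy - hyyy
  have ha : a ≠ 0 := by
    rintro rfl
    rcases hd with hd | hd <;> simp_all
  refine ⟨ha, hd.imp ?_ fun hd => ⟨hd, ?_⟩⟩
  · rintro rfl
    have hg : g = 0 := mul_left_cancel₀ hD (by linear_combination hxyy)
    have hh : h = 0 := mul_left_cancel₀ hD (by linear_combination hyyy)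
    have hi : i = a := mul_left_cancel₀ hD (by linear_combination a ^ 2 * hg - hxxx)
    ext r c
    fin_cases r <;> fin_cases c <;> simp [hg, hh, hi]
  · have ha2 : a ^ 2 ≠ 0 := pow_ne_zero 2 ha
    have h4 : (4 : k) ≠ 0 := by simpa [show (4 : k) = 2 ^ 2 by norm_num] using h2
    have hD4 : a ^ 2 + d ^ 2 = 4 * a ^ 2 := by linear_combination hd
    rw [hD4] at hxxx hxxy hxyy hD
    have hg : g * 4 = -(9 * a) := mul_left_cancel₀ ha2 (by linear_combination hxyy - 3 * a * hd)
    have hh : h * 4 = 3 * d := mul_left_cancel₀ ha2 (by linear_combination hxxy)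
    have hi : i = -(2 * a) := mul_left_cancel₀ hD (by linear_combination a ^ 2 * hg - hxxx)
    rw [flexRotation_neg_two_mul h2 ha, eq_div_of_mul_eq h4 hg, eq_div_of_mul_eq h4 hh, hi]

variable {M : Matrix (Fin 3) (Fin 3) k}

theorem eq_smul_one_or_eq_flexRotation (h2 : (2 : k) ≠ 0) (h3 : (3 : k) ≠ 0) (hM : IsUnit M.det)
    (hΩ : phiM M (nodalCubic k) = C M.det * nodalCubic k) :
    (∃ a : k, a ≠ 0 ∧ M = a • 1) ∨ ∃ a s : k, a ≠ 0 ∧ s ^ 2 = 3 ∧ M = flexRotation a s := by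
  obtain ⟨h02, h12⟩ := apply_two_eq_zero_of_phiM_nodalCubic h2 h3 hM hΩ
  obtain ⟨a, b, d, e, g, h, i, rfl⟩ : ∃ a b d e g h i, M = !![a, b, 0; d, e, 0; g, h, i] :=
    ⟨_, _, _, _, _, _, _, by simpa only [h02, h12] using Matrix.eta_fin_three M⟩
  have hdet : !![a, b, 0; d, e, 0; g, h, i].det = (a * e - b * d) * i := by
    simp [det_fin_three]
    ring
  rw [hdet] at hΩ hM
  obtain ⟨rfl, rfl⟩ := conformal_of_phiM_nodalCubic h2 hM.ne_zero hΩ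
  have hconf : e * e - -d * d = e ^ 2 + d ^ 2 := by ring
  rw [hconf] at hΩ hM
  obtain ⟨he, hscalar | ⟨hd, hflex⟩⟩ :=
    eq_smul_one_or_eq_flexRotation_of_conformal h2 (left_ne_zero_of_mul hM.ne_zero) hΩ
  · exact Or.inl ⟨e, he, hscalar⟩
  · have hs : (d / e) ^ 2 = 3 := by rw [div_pow, hd, mul_div_cancel_right₀ _ (pow_ne_zero 2 he)]
    exact Or.inr ⟨_, _, neg_ne_zero.mpr (mul_ne_zero h2 he), hs, hflex⟩

theorem phiM_nodalCubic_eq_iff (h2 : (2 : k) ≠ 0) (h3 : (3 : k) ≠ 0) (hM : IsUnit M.det) :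
    phiM M (nodalCubic k) = C M.det * nodalCubic k ↔
      (∃ a : k, a ≠ 0 ∧ M = a • 1) ∨ ∃ a s : k, a ≠ 0 ∧ s ^ 2 = 3 ∧ M = flexRotation a s := by
  refine ⟨eq_smul_one_or_eq_flexRotation h2 h3 hM, ?_⟩
  rintro (⟨a, -, rfl⟩ | ⟨a, s, -, hs, rfl⟩)
  · simpa using phiM_smul_one_nodalCubic a
  · rw [det_flexRotation h2 a hs]
    exact phiM_flexRotation_nodalCubic h2 a hs

theorem pow_three_eq_det_smul_one (h2 : (2 : k) ≠ 0) (h3 : (3 : k) ≠ 0) (hM : IsUnit M.det)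
    (hΩ : phiM M (nodalCubic k) = C M.det * nodalCubic k) : M ^ 3 = M.det • 1 := by
  rcases (phiM_nodalCubic_eq_iff h2 h3 hM).mp hΩ with ⟨a, -, rfl⟩ | ⟨a, s, -, hs, rfl⟩
  · simp [smul_pow]
  · rw [det_flexRotation h2 a hs, flexRotation_pow_three h2 a hs]

end NodalCubic

section Reflections

theorem det_eq_one_of_pow_eq_det_smul_one {R n : Type*} [CommRing R] [IsReduced R] [Fintype n]
    [DecidableEq n] {M : Matrix n n R} {m : ℕ} (hpow : M ^ m = M.det • 1)
    (heig : (1 - M).det = 0) : M.det = 1 := by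
  have hfactor : (1 - M) * ∑ i ∈ Finset.range m, M ^ i = (1 - M.det) • 1 := by
    rw [mul_neg_geom_sum, hpow, sub_smul, one_smul]
  have hdet := congrArg det hfactor
  rw [det_mul, heig, zero_mul, det_smul, det_one, mul_one] at hdet
  exact (sub_eq_zero.mp (eq_zero_of_pow_eq_zero hdet.symm)).symm

theorem det_one_sub_and_det_of_charpoly_eq {R : Type*} [CommRing R]
    {M : Matrix (Fin 3) (Fin 3) R} {ξ : R}
    (hM : M.charpoly = (Polynomial.X - 1) ^ 2 * (Polynomial.X - Polynomial.C ξ)) :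
    (1 - M).det = 0 ∧ M.det = ξ := by
  have heval (x : R) : (Matrix.scalar (Fin 3) x - M).det = (x - 1) ^ 2 * (x - ξ) := by
    rw [← Matrix.eval_charpoly, hM]
    simp
  exact ⟨by simpa using heval 1, by simpa [det_neg, pow_three] using heval 0⟩

theorem not_isPoissonReflection_of_pow_eq_det_smul_one {k : Type*} [Field k]
    {br : MvPolynomial (Fin 3) k → MvPolynomial (Fin 3) k → MvPolynomial (Fin 3) k} {m : ℕ}
    {M : Matrix (Fin 3) (Fin 3) k} (hbr : IsPoissonAut br M → M ^ m = M.det • 1) :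
    ¬ IsPoissonReflection br M := by
  rintro ⟨hP, -, ξ, hξ, -, hchar⟩
  obtain ⟨heig, rfl⟩ := det_one_sub_and_det_of_charpoly_eq hchar
  exact hξ (det_eq_one_of_pow_eq_det_smul_one (hbr hP) heig)

end Reflections

theorem stmt_8_general {k : Type*} [Field k] (h2 : (2 : k) ≠ 0) (h3 : (3 : k) ≠ 0)
    (M : Matrix (Fin 3) (Fin 3) k) (hM : IsUnit M.det) :
    (IsPoissonAut (jacBracket (X 0 ^ 2 + X 1 ^ 2) (3 * X 0 ^ 2 + 2 * X 0 * X 2)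
        (2 * X 1 * X 2)) M ↔
      (∃ a : k, a ≠ 0 ∧ M = a • (1 : Matrix (Fin 3) (Fin 3) k)) ∨
        (∃ a s : k, a ≠ 0 ∧ s ^ 2 = 3 ∧
          M = !![-a / 2, s * a / 2, 0; -(s * a) / 2, -a / 2, 0;
                 9 * a / 8, -(3 * s * a) / 8, a])) ∧
    ¬ IsPoissonReflection (jacBracket (X 0 ^ 2 + X 1 ^ 2) (3 * X 0 ^ 2 + 2 * X 0 * X 2)
        (2 * X 1 * X 2)) M := by
  have hgrad : jacBracket (X 0 ^ 2 + X 1 ^ 2) (3 * X 0 ^ 2 + 2 * X 0 * X 2) (2 * X 1 * X 2) =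
      jacBracket (grad (nodalCubic k) 2) (grad (nodalCubic k) 0) (grad (nodalCubic k) 1) := by
    simp [grad_nodalCubic]
  have hcubic := isPoissonAut_jacBracket_grad_iff hM (n := 3) (mod_cast h3)
    (isHomogeneous_nodalCubic k)
  rw [hgrad]
  exact ⟨hcubic.trans (phiM_nodalCubic_eq_iff h2 h3 hM),
    not_isPoissonReflection_of_pow_eq_det_smul_one fun hP =>
      pow_three_eq_det_smul_one h2 h3 hM (hcubic.mp hP)⟩

/-- Case `{x₁,x₂} = x₁² + x₂²`, `{x₂,x₃} = 3x₁² + 2x₁x₃`, `{x₃,x₁} = 2x₂x₃`. -/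
theorem stmt_8 {k : Type*} [Field k] [IsAlgClosed k] [CharZero k]
    (M : Matrix (Fin 3) (Fin 3) k) (hM : IsUnit M.det) :
    (IsPoissonAut (jacBracket (X 0 ^ 2 + X 1 ^ 2) (3 * X 0 ^ 2 + 2 * X 0 * X 2)
        (2 * X 1 * X 2)) M ↔
      (∃ a : k, a ≠ 0 ∧ M = a • (1 : Matrix (Fin 3) (Fin 3) k)) ∨
        (∃ a s : k, a ≠ 0 ∧ s ^ 2 = 3 ∧
          M = !![-a / 2, s * a / 2, 0; -(s * a) / 2, -a / 2, 0;
                 9 * a / 8, -(3 * s * a) / 8, a])) ∧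
    ¬ IsPoissonReflection (jacBracket (X 0 ^ 2 + X 1 ^ 2) (3 * X 0 ^ 2 + 2 * X 0 * X 2)
        (2 * X 1 * X 2)) M :=
  stmt_8_general two_ne_zero three_ne_zero M hM
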